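/- Let r, m ≥ 3 and suppose l ∈ ℕ satisfies C(l, r−1) > 2m. Then for every f with C(l,r) < f ≤ C(m,r) such that f ≠ C(x,r) for all x ∈ {0,…,m}, one has σ_r(m,f) = 0. -/

import Mathlib

open Finset
open scoped Classical

/-- `(n,e) →_r (m,f)`: every `r`-uniform hypergraph on `n` vertices with `e` edges
has an induced sub-hypergraph on `m` vertices with exactly `f` edges. -/
def PairArrows (r n e m f : ℕ) : Prop :=
  ∀ G : Finset (Finset (Fin n)), (∀ s ∈ G, s.card = r) → G.card = e →
    ∃ S : Finset (Fin n), S.card = m ∧ (G.filter (fun t => t ⊆ S)).card = f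

/-- The density `σ_r(m,f)`. -/
noncomputable def sigmaR (r m f : ℕ) : ℝ :=
  Filter.limsup
    (fun n : ℕ =>
      (((Finset.range (n.choose r + 1)).filter (fun e => PairArrows r n e m f)).card : ℝ) /
        (n.choose r : ℝ))
    Filter.atTop

/-- The number of colourings that are `0` on `T`. -/
lemma card_zero_on {β : Type*} [Fintype β] (q : ℕ) [NeZero q] (T : Finset β) :
    ((univ : Finset (β → Fin q)).filter (fun c => ∀ v ∈ T, c v = 0)).card * q ^ T.card
      = q ^ Fintype.card β := by
  have h : (univ : Finset (β → Fin q)).filter (fun c => ∀ v ∈ T, c v = 0)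
      = Fintype.piFinset (fun v => if v ∈ T then ({0} : Finset (Fin q)) else univ) := by
    ext c
    simp only [mem_filter, mem_univ, true_and, Fintype.mem_piFinset]
    constructor
    · intro h v
      by_cases hv : v ∈ T
      · simp [hv, h v hv]
      · simp [hv]
    · intro h v hv
      have := h v
      simpa [hv] using this
  rw [h, Fintype.card_piFinset]
  have h2 : ∀ v : β, (if v ∈ T then ({0} : Finset (Fin q)) else univ).card
      = if v ∈ T then 1 else q := by
    intro v
    by_cases hv : v ∈ T <;> simp [hv]
  have h3 : q ^ T.card = ∏ v : β, (if v ∈ T then q else 1) := by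
    rw [Finset.prod_ite_mem]
    simp
  rw [Finset.prod_congr rfl (fun v _ => h2 v), h3, ← Finset.prod_mul_distrib]
  have h4 : ∀ v : β, ((if v ∈ T then 1 else q) * (if v ∈ T then q else 1)) = q := by
    intro v
    by_cases hv : v ∈ T <;> simp [hv]
  rw [Finset.prod_congr rfl (fun v _ => h4 v)]
  simp

/-- Deletion method. -/
lemma deletion {β : Type*} [Fintype β] (q : ℕ) (hq : 0 < q) (k : ℕ) (V : Finset β)
    (F : Finset (Finset β)) (hF : ∀ B ∈ F, B.card = k + 1) :
    ∃ W ⊆ V, (∀ B ∈ F, ¬ B ⊆ W) ∧ V.card * q ^ k ≤ W.card * q ^ (k + 1) + F.card := by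
  have : NeZero q := ⟨hq.ne'⟩
  have hne : ∀ B ∈ F, ∃ x, x ∈ B := by
    intro B hB
    have : 0 < B.card := by rw [hF B hB]; omega
    exact Finset.card_pos.mp this
  by_contra hcon
  push Not at hcon
  let W0 : (β → Fin q) → Finset β := fun c => V.filter (fun v => c v = 0)
  let F0 : (β → Fin q) → Finset (Finset β) := fun c => F.filter (fun B => ∀ v ∈ B, c v = 0)
  let pick : Finset β → Finset β := fun B => if h : ∃ x, x ∈ B then {h.choose} else ∅
  have key : ∀ c : β → Fin q,
      (W0 c).card * q ^ (k + 1) + F.card < V.card * q ^ k + (F0 c).card * q ^ (k + 1) := by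
    intro c
    have h1 := hcon (W0 c \ (F0 c).biUnion pick)
      (sdiff_subset.trans (filter_subset _ _)) (by
        intro B hB hsub
        have hx := (hne B hB).choose_spec
        have hB0 : B ∈ F0 c := by
          refine mem_filter.mpr ⟨hB, fun v hv => ?_⟩
          exact (mem_filter.mp (mem_sdiff.mp (hsub hv)).1).2
        refine (mem_sdiff.mp (hsub hx)).2 (mem_biUnion.mpr ⟨B, hB0, ?_⟩)
        simp only [pick, dif_pos (hne B hB), mem_singleton])
    have h2 : (W0 c).card ≤ (W0 c \ (F0 c).biUnion pick).card + (F0 c).card := by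
      have h3 : ((F0 c).biUnion pick).card ≤ (F0 c).card * 1 := by
        apply card_biUnion_le_card_mul
        intro B _
        simp only [pick]
        split_ifs <;> simp
      have := Finset.le_card_sdiff ((F0 c).biUnion pick) (W0 c)
      omega
    have h4 := Nat.mul_le_mul_right (q ^ (k + 1)) h2
    rw [add_mul] at h4
    omega
  have hsum := Finset.sum_lt_sum_of_nonempty (s := (univ : Finset (β → Fin q)))
    univ_nonempty (fun c _ => key c)
  simp only [sum_add_distrib, ← sum_mul, sum_const, card_univ, Fintype.card_fun,
    Fintype.card_fin, smul_eq_mul] at hsum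
  have hW : (∑ c : β → Fin q, (W0 c).card) * q = V.card * q ^ Fintype.card β := by
    have : ∑ c : β → Fin q, (W0 c).card
        = ∑ v ∈ V, ((univ : Finset (β → Fin q)).filter (fun c => c v = 0)).card := by
      simp only [W0, card_filter]
      exact sum_comm
    rw [this, sum_mul, ← smul_eq_mul, ← sum_const]
    refine sum_congr rfl fun v _ => ?_
    have := card_zero_on q ({v} : Finset β)
    simpa using this
  have hF0 : (∑ c : β → Fin q, (F0 c).card) * q ^ (k + 1) = F.card * q ^ Fintype.card β := by
    have : ∑ c : β → Fin q, (F0 c).card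
        = ∑ B ∈ F, ((univ : Finset (β → Fin q)).filter (fun c => ∀ v ∈ B, c v = 0)).card := by
      simp only [F0, card_filter]
      exact sum_comm
    rw [this, sum_mul, ← smul_eq_mul, ← sum_const]
    refine sum_congr rfl fun B hB => ?_
    have := card_zero_on q B
    rwa [hF B hB] at this
  rw [hF0] at hsum
  have : (∑ c : β → Fin q, (W0 c).card) * q ^ (k + 1)
      = q ^ Fintype.card β * (V.card * q ^ k) := by
    rw [pow_succ', ← mul_assoc, hW]; ring
  rw [this] at hsum
  have h5 : q ^ Fintype.card β * F.card = F.card * q ^ Fintype.card β := mul_comm _ _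
  rw [h5, mul_assoc] at hsum
  exact lt_irrefl _ hsum

lemma sparse {n : ℕ} (r m q : ℕ) (hq : 0 < q) (B : Finset (Fin n)) (hm : m ≤ B.card) :
    ∃ H : Finset (Finset (Fin n)), (∀ s ∈ H, s ⊆ B ∧ s.card = r) ∧
      (∀ S : Finset (Fin n), S.card = m → (H.filter (fun t => t ⊆ S)).card ≤ m) ∧
      B.card.choose r * q ^ m ≤
        H.card * q ^ (m + 1) + B.card ^ m * (m.choose r).choose (m + 1) := by
  obtain ⟨W, hWV, hWF, hcard⟩ := deletion q hq m (powersetCard r B)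
    ((powersetCard m B).biUnion (fun S => powersetCard (m + 1) (powersetCard r S))) (by
      intro T hT
      obtain ⟨S, _, hS⟩ := mem_biUnion.mp hT
      exact (mem_powersetCard.mp hS).2)
  refine ⟨W, fun s hs => mem_powersetCard.mp (hWV hs), ?_, ?_⟩
  · intro S hS
    by_contra hlt
    push Not at hlt
    obtain ⟨T, hT, hTc⟩ := exists_subset_card_eq (show m + 1 ≤ _ from hlt)
    have hSB : (S ∩ B).card ≤ m := hS ▸ card_le_card inter_subset_left
    obtain ⟨S', h1, h2, h3⟩ := exists_subsuperset_card_eq (inter_subset_right : S ∩ B ⊆ B) hSB hm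
    refine hWF T (mem_biUnion.mpr ⟨S', mem_powersetCard.mpr ⟨h2, h3⟩,
      mem_powersetCard.mpr ⟨?_, hTc⟩⟩) (hT.trans (filter_subset _ _))
    intro t ht
    have h4 := mem_filter.mp (hT ht)
    have h5 := mem_powersetCard.mp (hWV h4.1)
    exact mem_powersetCard.mpr ⟨(subset_inter h4.2 h5.1).trans h1, h5.2⟩
  · rw [card_powersetCard] at hcard
    refine hcard.trans (Nat.add_le_add_left ?_ _)
    refine (card_biUnion_le_card_mul _ _ ((m.choose r).choose (m + 1)) ?_).trans ?_
    · intro S hS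
      rw [card_powersetCard, card_powersetCard, (mem_powersetCard.mp hS).2]
    · rw [card_powersetCard]
      exact Nat.mul_le_mul_right _ (Nat.choose_le_pow _ _)

lemma quant (r m N D : ℕ) (hr : 1 ≤ r) (hN : 1 ≤ N) :
    ∃ K n0 : ℕ, ∀ n ≥ n0, ∃ q : ℕ, 0 < q ∧ m ≤ K * q ∧ N * (K * q) ≤ n ∧ K ^ m * D ≤ q ∧
      q * (n ^ (r - 1) + 1) ≤ (K * q).choose r := by
  obtain ⟨s, rfl⟩ : ∃ s, r = s + 1 := ⟨r - 1, by omega⟩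
  obtain ⟨K, hK⟩ : ∃ K, K = 2 * (2 ^ (s + 1) * (s + 1).factorial * (2 * N) ^ s) := ⟨_, rfl⟩
  have hK1 : 1 ≤ K := by
    rw [hK]
    have : 0 < 2 * (2 ^ (s + 1) * (s + 1).factorial * (2 * N) ^ s) := by positivity
    exact this
  refine ⟨K, K * N * (K ^ m * D + m + 2 * (s + 1) + 1), fun n hn => ⟨n / (K * N), ?_⟩⟩
  have hKN : 0 < K * N := by positivity
  have hq0 : K ^ m * D + m + 2 * (s + 1) + 1 ≤ n / (K * N) := by
    rw [Nat.le_div_iff_mul_le hKN, mul_comm]; exact hn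
  have hlt := Nat.lt_mul_div_succ n hKN
  have hle := Nat.mul_div_le n (K * N)
  generalize n / (K * N) = q at *
  have hb : q ≤ K * q := Nat.le_mul_of_pos_left q hK1
  refine ⟨by omega, by omega, ?_, by omega, ?_⟩
  · calc N * (K * q) = K * N * q := by ring
      _ ≤ n := hle
  have hn1 : 1 ≤ n := by
    have : 0 < K * N * q := Nat.mul_pos hKN (by omega)
    omega
  have hn2 : n ≤ 2 * K * N * q := by
    have : K * N * (q + 1) ≤ K * N * (q + q) := Nat.mul_le_mul_left _ (by omega)
    calc n ≤ K * N * (q + 1) := hlt.le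
      _ ≤ K * N * (q + q) := this
      _ = _ := by ring
  have h1 : q * (n ^ s + 1) ≤ 2 * q * (2 * K * N * q) ^ s := by
    have h2 : 1 ≤ n ^ s := Nat.one_le_pow _ _ hn1
    have h3 : n ^ s ≤ (2 * K * N * q) ^ s := Nat.pow_le_pow_left hn2 s
    calc q * (n ^ s + 1) ≤ q * (2 * (2 * K * N * q) ^ s) := Nat.mul_le_mul_left _ (by omega)
      _ = _ := by ring
  have h2 : (K * q) ^ (s + 1) ≤ 2 ^ (s + 1) * (s + 1).factorial * (K * q).choose (s + 1) := by
    have h3 := Nat.pow_sub_le_descFactorial (K * q) (s + 1)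
    rw [Nat.descFactorial_eq_factorial_mul_choose] at h3
    calc (K * q) ^ (s + 1) ≤ (2 * (K * q + 1 - (s + 1))) ^ (s + 1) :=
          Nat.pow_le_pow_left (by omega) _
      _ = 2 ^ (s + 1) * (K * q + 1 - (s + 1)) ^ (s + 1) := by rw [mul_pow]
      _ ≤ _ := by rw [mul_assoc]; exact Nat.mul_le_mul_left _ h3
  have hpos : 0 < 2 ^ (s + 1) * (s + 1).factorial := by positivity
  refine Nat.le_of_mul_le_mul_left ?_ hpos
  refine (Nat.mul_le_mul_left _ h1).trans (le_trans (le_of_eq ?_) h2)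
  calc 2 ^ (s + 1) * (s + 1).factorial * (2 * q * (2 * K * N * q) ^ s)
      = 2 * (2 ^ (s + 1) * (s + 1).factorial * (2 * N) ^ s) * K ^ s * q ^ (s + 1) := by
        have : (2 * K * N * q) ^ s = (2 * N) ^ s * K ^ s * q ^ s := by
          rw [← mul_pow, ← mul_pow]; congr 1; ring
        rw [this]; ring
    _ = (K * q) ^ (s + 1) := by rw [← hK]; ring

/-- The vertices below `a`. -/
lemma card_below (n a : ℕ) (ha : a ≤ n) :
    ((univ : Finset (Fin n)).filter (fun i => i.val < a)).card = a := by
  rw [Fin.card_filter_val_lt]; omega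

lemma filter_clique {n : ℕ} (r : ℕ) (A S : Finset (Fin n)) :
    (powersetCard r A).filter (fun t => t ⊆ S) = powersetCard r (S ∩ A) := by
  ext t
  simp only [mem_filter, mem_powersetCard, subset_inter_iff]
  tauto

/-- Clique plus few edges. -/
lemma plus_case (r m n b f x : ℕ) (hr : 1 ≤ r) (hb : b ≤ n)
    (hf1 : x.choose r + m < f) (hf2 : f < (x + 1).choose r)
    (hH : ∀ B : Finset (Fin n), B.card = b → ∃ H : Finset (Finset (Fin n)),
      (∀ s ∈ H, s ⊆ B ∧ s.card = r) ∧
      (∀ S : Finset (Fin n), S.card = m → (H.filter (fun t => t ⊆ S)).card ≤ m) ∧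
      n.choose (r - 1) ≤ H.card)
    (e : ℕ) (he : e ≤ (n - b).choose r) : ¬ PairArrows r n e m f := by
  obtain ⟨a, ha, hae, hrem⟩ : ∃ a ≤ n - b, a.choose r ≤ e ∧
      e - a.choose r ≤ n.choose (r - 1) := by
    refine ⟨Nat.findGreatest (fun a => a.choose r ≤ e) (n - b), Nat.findGreatest_le _, ?_, ?_⟩
    · exact Nat.findGreatest_spec (P := fun a => a.choose r ≤ e) (Nat.zero_le _)
        (by simp [Nat.choose_eq_zero_of_lt (show 0 < r from hr)])
    · have hle := Nat.findGreatest_le (P := fun a => a.choose r ≤ e) (n - b)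
      have hgr := @Nat.findGreatest_is_greatest
        (Nat.findGreatest (fun a => a.choose r ≤ e) (n - b) + 1) (fun a => a.choose r ≤ e) _
        (n - b) (Nat.lt_succ_self _)
      generalize Nat.findGreatest (fun a => a.choose r ≤ e) (n - b) = a at *
      rcases hle.eq_or_lt with h | h
      · rw [h]; omega
      · have h1 := hgr h
        obtain ⟨s, rfl⟩ : ∃ s, r = s + 1 := ⟨r - 1, by omega⟩
        have h2 := Nat.choose_succ_succ a s
        have h3 : a.choose s ≤ n.choose s := Nat.choose_le_choose s (by omega)
        simp only [Nat.succ_eq_add_one] at h2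
        simp only [Nat.add_sub_cancel]
        omega
  set A : Finset (Fin n) := univ.filter (fun i => i.val < a) with hA
  have hAc : A.card = a := card_below n a (by omega)
  have hcompl : b ≤ (Aᶜ).card := by rw [card_compl, hAc, Fintype.card_fin]; omega
  obtain ⟨B, hBA, hBc⟩ := exists_subset_card_eq hcompl
  obtain ⟨H, hH1, hH2, hH3⟩ := hH B hBc
  obtain ⟨H', hH', hH'c⟩ := exists_subset_card_eq (hrem.trans hH3)
  have hdisj : Disjoint (powersetCard r A) H' := by
    rw [Finset.disjoint_left]
    intro t ht ht'
    obtain ⟨h1, h2⟩ := mem_powersetCard.mp ht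
    have h3 := (hH1 t (hH' ht')).1
    obtain ⟨y, hy⟩ : t.Nonempty := card_pos.mp (by omega)
    exact (mem_compl.mp (hBA (h3 hy))) (h1 hy)
  intro harr
  obtain ⟨S, hSm, hSf⟩ := harr (powersetCard r A ∪ H') (by
      intro s hs
      rcases mem_union.mp hs with h | h
      · exact (mem_powersetCard.mp h).2
      · exact (hH1 s (hH' h)).2) (by
      rw [card_union_of_disjoint hdisj, card_powersetCard, hAc, hH'c]; omega)
  rw [filter_union, card_union_of_disjoint (disjoint_filter_filter hdisj), filter_clique,
    card_powersetCard] at hSf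
  have h1 : (H'.filter (fun t => t ⊆ S)).card ≤ m :=
    (card_le_card (filter_subset_filter _ hH')).trans (hH2 S hSm)
  rcases Nat.lt_or_ge x (S ∩ A).card with h | h
  · have := Nat.choose_le_choose r (show x + 1 ≤ _ from h)
    omega
  · have := Nat.choose_le_choose r h
    omega

/-- Clique minus few edges. -/
lemma minus_case (r m n b f x : ℕ) (hr : 1 ≤ r) (hb : b ≤ n)
    (hf1 : x.choose r < f) (hf2 : f + m < (x + 1).choose r)
    (hH : ∀ B : Finset (Fin n), B.card = b → ∃ H : Finset (Finset (Fin n)),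
      (∀ s ∈ H, s ⊆ B ∧ s.card = r) ∧
      (∀ S : Finset (Fin n), S.card = m → (H.filter (fun t => t ⊆ S)).card ≤ m) ∧
      n.choose (r - 1) ≤ H.card)
    (e : ℕ) (he : b.choose r ≤ e) (he2 : e ≤ n.choose r) : ¬ PairArrows r n e m f := by
  obtain ⟨a, hba, han, hae, hrem⟩ : ∃ a, b ≤ a ∧ a ≤ n ∧ e ≤ a.choose r ∧
      a.choose r - e ≤ n.choose (r - 1) := by
    have hex : ∃ a, b ≤ a ∧ e ≤ a.choose r := ⟨n, hb, he2⟩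
    obtain ⟨h1, h2⟩ := Nat.find_spec hex
    have h3 := Nat.find_min' hex ⟨hb, he2⟩
    have h4 := @Nat.find_min _ _ hex
    generalize Nat.find hex = a at *
    refine ⟨a, h1, h3, h2, ?_⟩
    rcases h1.eq_or_lt with h | h
    · rw [← h]; omega
    · obtain ⟨a', rfl⟩ : ∃ a', a = a' + 1 := ⟨a - 1, by omega⟩
      have h5 := h4 (Nat.lt_succ_self a')
      obtain ⟨s, rfl⟩ : ∃ s, r = s + 1 := ⟨r - 1, by omega⟩
      have h6 := Nat.choose_succ_succ a' s
      have h7 : a'.choose s ≤ n.choose s := Nat.choose_le_choose s (by omega)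
      simp only [Nat.succ_eq_add_one] at h6
      simp only [Nat.add_sub_cancel]
      have h8 : ¬ e ≤ a'.choose (s + 1) := fun h => h5 ⟨by omega, h⟩
      omega
  set A : Finset (Fin n) := univ.filter (fun i => i.val < a) with hA
  have hAc : A.card = a := card_below n a han
  obtain ⟨B, hBA, hBc⟩ := exists_subset_card_eq (show b ≤ A.card by omega)
  obtain ⟨H, hH1, hH2, hH3⟩ := hH B hBc
  obtain ⟨H', hH', hH'c⟩ := exists_subset_card_eq (hrem.trans hH3)
  have hsub : H' ⊆ powersetCard r A := by
    intro t ht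
    obtain ⟨h1, h2⟩ := hH1 t (hH' ht)
    exact mem_powersetCard.mpr ⟨h1.trans hBA, h2⟩
  intro harr
  obtain ⟨S, hSm, hSf⟩ := harr (powersetCard r A \ H') (by
      intro s hs
      exact (mem_powersetCard.mp (mem_sdiff.mp hs).1).2) (by
      rw [card_sdiff_of_subset hsub, card_powersetCard, hAc, hH'c]; omega)
  have hsplit : ((powersetCard r A \ H').filter (fun t => t ⊆ S)).card
      + (H'.filter (fun t => t ⊆ S)).card = (S ∩ A).card.choose r := by
    rw [← card_powersetCard, ← filter_clique,
      ← card_union_of_disjoint (disjoint_filter_filter sdiff_disjoint), ← filter_union,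
      sdiff_union_of_subset hsub]
  have h1 : (H'.filter (fun t => t ⊆ S)).card ≤ m :=
    (card_le_card (filter_subset_filter _ hH')).trans (hH2 S hSm)
  rcases Nat.lt_or_ge x (S ∩ A).card with h | h
  · have := Nat.choose_le_choose r (show x + 1 ≤ _ from h)
    omega
  · have := Nat.choose_le_choose r h
    omega

lemma choose_sub_bound (n s : ℕ) : ∀ b ≤ n,
    n.choose (s + 1) ≤ (n - b).choose (s + 1) + b * (n - 1).choose s := by
  intro b
  induction b with
  | zero => intro _; simp
  | succ b ih =>
    intro hb
    have h1 := ih (by omega)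
    obtain ⟨k, hk⟩ : ∃ k, n - b = k + 1 := ⟨n - b - 1, by omega⟩
    have hk2 : n - (b + 1) = k := by omega
    rw [hk, Nat.choose_succ_succ' k s] at h1
    have h2 : k.choose s ≤ (n - 1).choose s := Nat.choose_le_choose s (by omega)
    rw [hk2, add_mul, one_mul]
    omega

lemma choose_small_bound (n s b : ℕ) (hb : b ≤ n) :
    b.choose (s + 1) ≤ b * (n - 1).choose s := by
  rcases b with _ | b
  · simp
  · have h := Nat.add_one_mul_choose_eq b s
    have h2 : b.choose s ≤ (n - 1).choose s := Nat.choose_le_choose s (by omega)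
    calc (b + 1).choose (s + 1) ≤ (b + 1).choose (s + 1) * (s + 1) :=
          Nat.le_mul_of_pos_right _ (by omega)
      _ = (b + 1) * b.choose s := h.symm
      _ ≤ _ := Nat.mul_le_mul_left _ h2

lemma count_bound (r m f x N : ℕ) (hr : 1 ≤ r) (hN : 1 ≤ N)
    (hf : (x.choose r + m < f ∧ f < (x + 1).choose r) ∨
      (x.choose r < f ∧ f + m < (x + 1).choose r)) :
    ∃ n0, ∀ n ≥ n0,
      N * ((Finset.range (n.choose r + 1)).filter (fun e => PairArrows r n e m f)).card
        ≤ r * n.choose r := by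
  obtain ⟨K, n0, hq⟩ := quant r m N ((m.choose r).choose (m + 1)) hr hN
  refine ⟨n0 + 1, fun n hn => ?_⟩
  obtain ⟨q, hq0, hmb, hNb, hDq, hbig⟩ := hq n (by omega)
  have hbn : K * q ≤ n := (Nat.le_mul_of_pos_left _ hN).trans hNb
  have hH : ∀ B : Finset (Fin n), B.card = K * q → ∃ H : Finset (Finset (Fin n)),
      (∀ s ∈ H, s ⊆ B ∧ s.card = r) ∧
      (∀ S : Finset (Fin n), S.card = m → (H.filter (fun t => t ⊆ S)).card ≤ m) ∧
      n.choose (r - 1) ≤ H.card := by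
    intro B hB
    obtain ⟨H, h1, h2, h3⟩ := sparse r m q hq0 B (by omega)
    refine ⟨H, h1, h2, ?_⟩
    rw [hB] at h3
    have h4 : (K * q).choose r ≤ (H.card + 1) * q := by
      refine Nat.le_of_mul_le_mul_right (c := q ^ m) ?_ (by positivity)
      refine h3.trans ?_
      calc H.card * q ^ (m + 1) + (K * q) ^ m * (m.choose r).choose (m + 1)
          = H.card * q ^ (m + 1) + (K ^ m * (m.choose r).choose (m + 1)) * q ^ m := by
            rw [mul_pow]; ring
        _ ≤ H.card * q ^ (m + 1) + q * q ^ m :=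
            Nat.add_le_add_left (Nat.mul_le_mul_right _ hDq) _
        _ = (H.card + 1) * q * q ^ m := by ring
    have h5 : q * (n ^ (r - 1) + 1) ≤ q * (H.card + 1) := by
      rw [mul_comm q (H.card + 1)]; exact hbig.trans h4
    have h6 := Nat.le_of_mul_le_mul_left h5 hq0
    have h7 := Nat.choose_le_pow n (r - 1)
    omega
  have hcount : ((Finset.range (n.choose r + 1)).filter (fun e => PairArrows r n e m f)).card
      ≤ (K * q) * (n - 1).choose (r - 1) := by
    obtain ⟨s, rfl⟩ : ∃ s, r = s + 1 := ⟨r - 1, by omega⟩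
    rcases hf with ⟨hf1, hf2⟩ | ⟨hf1, hf2⟩
    · have hsub : (Finset.range (n.choose (s + 1) + 1)).filter
          (fun e => PairArrows (s + 1) n e m f)
          ⊆ Ioc ((n - K * q).choose (s + 1)) (n.choose (s + 1)) := by
        intro e he
        obtain ⟨h1, h2⟩ := mem_filter.mp he
        rw [mem_range] at h1
        rw [mem_Ioc]
        refine ⟨?_, by omega⟩
        by_contra hle
        exact plus_case (s + 1) m n (K * q) f x hr hbn hf1 hf2 hH e (by omega) h2
      refine (card_le_card hsub).trans ?_
      rw [Nat.card_Ioc]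
      have := choose_sub_bound n s (K * q) hbn
      simp only [Nat.add_sub_cancel]
      omega
    · have hsub : (Finset.range (n.choose (s + 1) + 1)).filter
          (fun e => PairArrows (s + 1) n e m f)
          ⊆ range ((K * q).choose (s + 1)) := by
        intro e he
        obtain ⟨h1, h2⟩ := mem_filter.mp he
        rw [mem_range] at h1 ⊢
        by_contra hle
        exact minus_case (s + 1) m n (K * q) f x hr hbn hf1 hf2 hH e (by omega) (by omega) h2
      refine (card_le_card hsub).trans ?_
      rw [card_range]
      exact choose_small_bound n s (K * q) hbn
  have hid : n * (n - 1).choose (r - 1) = r * n.choose r := by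
    obtain ⟨s, rfl⟩ : ∃ s, r = s + 1 := ⟨r - 1, by omega⟩
    obtain ⟨k, rfl⟩ : ∃ k, n = k + 1 := ⟨n - 1, by omega⟩
    have := Nat.add_one_mul_choose_eq k s
    simp only [Nat.add_sub_cancel]
    rw [this, mul_comm]
  calc N * _ ≤ N * ((K * q) * (n - 1).choose (r - 1)) := Nat.mul_le_mul_left _ hcount
    _ = (N * (K * q)) * (n - 1).choose (r - 1) := by ring
    _ ≤ n * (n - 1).choose (r - 1) := Nat.mul_le_mul_right _ hNb
    _ = _ := hid

theorem sigma_zero_above_binomial (r m l : ℕ) (hr : 3 ≤ r) (hm : 3 ≤ m)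
    (hl : 2 * m < l.choose (r - 1)) :
    ∀ f : ℕ, l.choose r < f → f ≤ m.choose r → (∀ x ≤ m, f ≠ x.choose r) →
      sigmaR r m f = 0 := by
  intro f hf1 hf2 hf3
  have hfm : f < m.choose r := lt_of_le_of_ne hf2 (hf3 m le_rfl)
  obtain ⟨x, hx⟩ : ∃ x, (x.choose r + m < f ∧ f < (x + 1).choose r) ∨
      (x.choose r < f ∧ f + m < (x + 1).choose r) := by
    have hex : ∃ y : ℕ, f < y.choose r := ⟨m, hfm⟩
    have h1 := Nat.find_spec hex
    have h2 := Nat.find_min' hex hfm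
    have h3 := @Nat.find_min _ _ hex
    generalize Nat.find hex = y at *
    have hly : l < y := by
      by_contra h
      have := Nat.choose_le_choose r (show y ≤ l by omega)
      omega
    obtain ⟨x, rfl⟩ : ∃ x, y = x + 1 := ⟨y - 1, by omega⟩
    have h4 := h3 (Nat.lt_succ_self x)
    have h5 := hf3 x (by omega)
    obtain ⟨s, rfl⟩ : ∃ s, r = s + 1 := ⟨r - 1, by omega⟩
    have h6 := Nat.choose_succ_succ' x s
    have h7 : l.choose s ≤ x.choose s := Nat.choose_le_choose s (by omega)
    simp only [Nat.add_sub_cancel] at hl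
    refine ⟨x, ?_⟩
    omega
  apply Filter.Tendsto.limsup_eq
  rw [Metric.tendsto_atTop]
  intro ε hε
  obtain ⟨N, hN⟩ := exists_nat_gt ((r : ℝ) / ε)
  have hNpos : (0 : ℝ) < N := lt_of_le_of_lt (by positivity) hN
  obtain ⟨n0, hn0⟩ := count_bound r m f x N (by omega) (by exact_mod_cast hNpos) hx
  refine ⟨n0 + r, fun n hn => ?_⟩
  have h1 := hn0 n (by omega)
  have hpos : 0 < n.choose r := Nat.choose_pos (by omega)
  have hposR : (0 : ℝ) < (n.choose r : ℝ) := by exact_mod_cast hpos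
  rw [Real.dist_eq, sub_zero, abs_of_nonneg (by positivity), div_lt_iff₀ hposR]
  have h2 : (N : ℝ) * (((Finset.range (n.choose r + 1)).filter
      (fun e => PairArrows r n e m f)).card : ℝ) ≤ r * (n.choose r : ℝ) := by exact_mod_cast h1
  rw [div_lt_iff₀ hε] at hN
  refine lt_of_mul_lt_mul_left (lt_of_le_of_lt h2 ?_) hNpos.le
  calc (r : ℝ) * (n.choose r : ℝ) < (N * ε) * (n.choose r : ℝ) :=
        mul_lt_mul_of_pos_right hN hposR
    _ = _ := by ring
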